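/- (Theorem 2, induction step) Let S be a sample, φ an LTLf formula, and let S₁ = {(u,b) ∈ S : V(u ⊨ φ) = 1} and S₂ = {(u,b) ∈ S : V(u ⊨ φ) = 0}, and assume S₁ and S₂ are both nonempty. If ψ₁ and ψ₂ are LTLf formulas with l(S₁, ψ₁) ≤ κ and l(S₂, ψ₂) ≤ κ for a real number κ ≥ 0, then l(S, (φ ∧ ψ₁) ∨ (¬φ ∧ ψ₂)) ≤ κ. -/

import Mathlib

/-- Syntax of LTLf formulas over propositional variables `P`:
`φ ::= p | ¬φ | φ ∨ φ | X φ | φ U φ`. -/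
inductive LTL (P : Type) : Type
  | atom : P → LTL P
  | neg  : LTL P → LTL P
  | disj : LTL P → LTL P → LTL P
  | next : LTL P → LTL P
  | untl : LTL P → LTL P → LTL P

open Classical in
/-- The valuation `V(φ, u, i) ∈ {0,1}` of an LTLf formula on a finite trace
`u : List (Set P)` at position `i`. -/
noncomputable def Val {P : Type} : LTL P → List (Set P) → ℕ → ℕ
  | .atom p, u, i => if p ∈ u.getD i ∅ then 1 else 0
  | .neg φ, u, i => 1 - Val φ u i
  | .disj φ ψ, u, i => max (Val φ u i) (Val ψ u i)
  | .next φ, u, i => if i + 1 < u.length ∧ Val φ u (i + 1) = 1 then 1 else 0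
  | .untl φ ψ, u, i =>
      if ∃ j, i ≤ j ∧ j < u.length ∧ Val ψ u j = 1 ∧
          ∀ k, i ≤ k → k < j → Val φ u k = 1 then 1 else 0

/-- Derived conjunction `φ ∧ ψ := ¬(¬φ ∨ ¬ψ)`. -/
def LTL.conj {P : Type} (φ ψ : LTL P) : LTL P := .neg (.disj (.neg φ) (.neg ψ))

/-- The loss `l(S,φ) = (1/|S|) · Σ_{(u,b)∈S} |V(u⊨φ) − b|`. -/
noncomputable def loss {P : Type} (S : Finset (List (Set P) × ℕ)) (φ : LTL P) : ℝ :=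
  (∑ x ∈ S, |(Val φ x.1 0 : ℝ) - (x.2 : ℝ)|) / (S.card : ℝ)

theorem Val_le_one_aux {P : Type} (φ : LTL P) (u : List (Set P)) (i : ℕ) : Val φ u i ≤ 1 := by
  induction φ generalizing i with
  | atom p => simp only [Val]; split_ifs <;> omega
  | neg φ ih => simp only [Val]; omega
  | disj φ ψ ih1 ih2 => simp only [Val]; exact max_le (ih1 i) (ih2 i)
  | next φ ih => simp only [Val]; split_ifs <;> omega
  | untl φ ψ ih1 ih2 => simp only [Val]; split_ifs <;> omega

/-- (Theorem 2, induction step.) If `S₁` and `S₂` are the nonempty subsamples of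
`S` on which `φ` evaluates to `1` and `0` respectively, and `ψ₁, ψ₂` achieve
loss at most `κ ≥ 0` on `S₁` and `S₂`, then `(φ ∧ ψ₁) ∨ (¬φ ∧ ψ₂)` achieves
loss at most `κ` on `S`. -/
theorem loss_split_le {P : Type}
    (S : Finset (List (Set P) × ℕ)) (hS : S.Nonempty)
    (hlab : ∀ x ∈ S, x.2 = 0 ∨ x.2 = 1)
    (hfun : ∀ u b₁ b₂, (u, b₁) ∈ S → (u, b₂) ∈ S → b₁ = b₂)
    (φ ψ₁ ψ₂ : LTL P) (κ : ℝ) (hκ : 0 ≤ κ)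
    (h1 : (S.filter (fun x => Val φ x.1 0 = 1)).Nonempty)
    (h2 : (S.filter (fun x => Val φ x.1 0 = 0)).Nonempty)
    (hl1 : loss (S.filter (fun x => Val φ x.1 0 = 1)) ψ₁ ≤ κ)
    (hl2 : loss (S.filter (fun x => Val φ x.1 0 = 0)) ψ₂ ≤ κ) :
    loss S (LTL.disj (LTL.conj φ ψ₁) (LTL.conj (LTL.neg φ) ψ₂)) ≤ κ := by
  have e : S.filter (fun x => ¬ Val φ x.1 0 = 1) = S.filter (fun x => Val φ x.1 0 = 0) := by
    apply Finset.filter_congr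
    intro x _
    have := Val_le_one_aux φ x.1 0
    omega
  have hc := Finset.card_filter_add_card_filter_not (s := S) (fun x => Val φ x.1 0 = 1)
  have hs := Finset.sum_filter_add_sum_filter_not S (fun x => Val φ x.1 0 = 1)
    (fun x => |(Val (LTL.disj (LTL.conj φ ψ₁) (LTL.conj (LTL.neg φ) ψ₂)) x.1 0 : ℝ) - (x.2 : ℝ)|)
  rw [e] at hc hs
  have p1 : (0 : ℝ) < ((S.filter (fun x => Val φ x.1 0 = 1)).card : ℝ) := by
    exact_mod_cast h1.card_pos
  have p2 : (0 : ℝ) < ((S.filter (fun x => Val φ x.1 0 = 0)).card : ℝ) := by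
    exact_mod_cast h2.card_pos
  have p : (0 : ℝ) < (S.card : ℝ) := by exact_mod_cast hS.card_pos
  unfold loss at *
  rw [div_le_iff₀ p1] at hl1
  rw [div_le_iff₀ p2] at hl2
  rw [div_le_iff₀ p, ← hs, ← hc]
  push_cast
  rw [mul_add]
  refine add_le_add (le_trans (le_of_eq ?_) hl1) (le_trans (le_of_eq ?_) hl2)
  · apply Finset.sum_congr rfl
    intro x hx
    have hv := (Finset.mem_filter.mp hx).2
    have a := Val_le_one_aux ψ₁ x.1 0
    have b := Val_le_one_aux ψ₂ x.1 0
    have : Val (LTL.disj (LTL.conj φ ψ₁) (LTL.conj (LTL.neg φ) ψ₂)) x.1 0 = Val ψ₁ x.1 0 := by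
      simp only [Val, LTL.conj, hv]
      omega
    rw [this]
  · apply Finset.sum_congr rfl
    intro x hx
    have hv := (Finset.mem_filter.mp hx).2
    have a := Val_le_one_aux ψ₁ x.1 0
    have b := Val_le_one_aux ψ₂ x.1 0
    have : Val (LTL.disj (LTL.conj φ ψ₁) (LTL.conj (LTL.neg φ) ψ₂)) x.1 0 = Val ψ₂ x.1 0 := by
      simp only [Val, LTL.conj, hv]
      omega
    rw [this]
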